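/- For every y > 0, the function x ↦ y^x / Γ(x+1) is decreasing on the interval [y, ∞). -/

import Mathlib

/-!
Since `log Γ(x + 1) - log Γ(x) = log x`, the slope of `log ∘ Γ` over a unit interval `[c, c + 1]`
is `log c`. Slopes of a convex function increase with both endpoints, so for `0 < a < b` the slope
over `[a + 1, b + 1]` is at least `log c` for every `c ≤ min b (a + 1)`; taking `c > a` makes the
resulting bound `a ^ (b - a) * Γ(a + 1) < Γ(b + 1)` strict.
-/

theorem slope_le_slope_of_convexOn {𝕜 : Type*} [Field 𝕜] [LinearOrder 𝕜] [IsStrictOrderedRing 𝕜]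
    {s : Set 𝕜} {f : 𝕜 → 𝕜} (hf : ConvexOn 𝕜 s f) {x y u v : 𝕜} (hx : x ∈ s) (hv : v ∈ s)
    (hxy : x < y) (huv : u < v) (hxu : x ≤ u) (hyv : y ≤ v) :
    slope f x y ≤ slope f u v := by
  have hxv : x < v := hxy.trans_le hyv
  have hy : y ∈ s := hf.1.ordConnected.out hx hv ⟨hxy.le, hyv⟩
  have hu : u ∈ s := hf.1.ordConnected.out hx hv ⟨hxu, huv.le⟩
  calc slope f x y ≤ slope f x v := hf.slope_mono hx ⟨hy, hxy.ne'⟩ ⟨hv, hxv.ne'⟩ hyv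
    _ = slope f v x := slope_comm f x v
    _ ≤ slope f v u := hf.slope_mono hv ⟨hx, hxv.ne⟩ ⟨hu, huv.ne⟩ hxu
    _ = slope f u v := slope_comm f v u

theorem slope_log_Gamma_add_one {x : ℝ} (hx : 0 < x) :
    slope (Real.log ∘ Real.Gamma) x (x + 1) = Real.log x := by
  simp [slope_def_field, Real.Gamma_add_one hx.ne',
    Real.log_mul hx.ne' (Real.Gamma_pos_of_pos hx).ne']

theorem log_lt_slope_log_Gamma {a b : ℝ} (ha : 0 < a) (hab : a < b) :
    Real.log a < slope (Real.log ∘ Real.Gamma) (a + 1) (b + 1) := by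
  obtain ⟨c, hac, hc⟩ := exists_between (lt_min hab (lt_add_one a))
  obtain ⟨hcb, hca⟩ := lt_min_iff.mp hc
  have hc₀ : 0 < c := ha.trans hac
  calc Real.log a < Real.log c := Real.log_lt_log ha hac
    _ = slope (Real.log ∘ Real.Gamma) c (c + 1) := (slope_log_Gamma_add_one hc₀).symm
    _ ≤ slope (Real.log ∘ Real.Gamma) (a + 1) (b + 1) :=
      slope_le_slope_of_convexOn Real.convexOn_log_Gamma hc₀ (Set.mem_Ioi.mpr (by linarith))
        (lt_add_one c) (by linarith) hca.le (by linarith)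

theorem rpow_sub_mul_Gamma_add_one_lt {a b : ℝ} (ha : 0 < a) (hab : a < b) :
    a ^ (b - a) * Real.Gamma (a + 1) < Real.Gamma (b + 1) := by
  have hΓa : 0 < Real.Gamma (a + 1) := Real.Gamma_pos_of_pos (by linarith)
  have hΓb : 0 < Real.Gamma (b + 1) := Real.Gamma_pos_of_pos (by linarith)
  have hslope : Real.log a <
      (Real.log (Real.Gamma (b + 1)) - Real.log (Real.Gamma (a + 1))) / (b - a) := by
    simpa only [slope_def_field, Function.comp_apply, add_sub_add_right_eq_sub] using
      log_lt_slope_log_Gamma ha hab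
  rw [← lt_div_iff₀ hΓa, Real.rpow_lt_iff_lt_log ha (div_pos hΓb hΓa),
    Real.log_div hΓb.ne' hΓa.ne', mul_comm]
  exact (lt_div_iff₀ (sub_pos.mpr hab)).mp hslope

/-- **Lemma.** For `y > 0`, the function `x ↦ y^x / Γ(x+1)` is decreasing on `[y, ∞)`. -/
theorem rpow_div_Gamma_strictAntiOn (y : ℝ) (hy : 0 < y) :
    StrictAntiOn (fun x : ℝ => y ^ x / Real.Gamma (x + 1)) (Set.Ici y) := by
  intro a (hya : y ≤ a) b _ hab
  have ha : 0 < a := hy.trans_le hya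
  have hΓa : 0 < Real.Gamma (a + 1) := Real.Gamma_pos_of_pos (by linarith)
  have hΓb : 0 < Real.Gamma (b + 1) := Real.Gamma_pos_of_pos (by linarith)
  refine (div_lt_div_iff₀ hΓb hΓa).mpr ?_
  calc y ^ b * Real.Gamma (a + 1)
      = y ^ a * (y ^ (b - a) * Real.Gamma (a + 1)) := by
        rw [← mul_assoc, ← Real.rpow_add hy, add_sub_cancel]
    _ ≤ y ^ a * (a ^ (b - a) * Real.Gamma (a + 1)) := by gcongr
    _ < y ^ a * Real.Gamma (b + 1) := by
        gcongr
        exact rpow_sub_mul_Gamma_add_one_lt ha hab
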